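/- arXiv:2403.13983 — 15 statements merged into one kernel-verified Lean document; each statement's English description precedes it below -/
import Mathlib

section
/- If a function v : P × S → ℝ satisfies strong graph-monotonicity on a communication graph G, then v is G-monotone. (Proposition: SGM implies graph monotonicity.) -/
open Finset

/-- A path on a communication graph with edge relation `E`. -/
def IsCommPath {S P : Type*} (E : S → P → Prop) {N : ℕ}
    (s : Fin (N + 1) → S) (p : Fin (N + 1) → P) : Prop :=
  Function.Injective s ∧ Function.Injective p ∧
    (∀ i, E (s i) (p i)) ∧ ∀ i : Fin N, E (s i.succ) (p i.castSucc)

/-- `v` is G-monotone. -/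
def GMonotone {S P : Type*} (E : S → P → Prop) (v : P × S → ℝ) : Prop :=
  ∀ N : ℕ, 1 ≤ N → ∀ (s : Fin (N + 1) → S) (p : Fin (N + 1) → P),
    IsCommPath E s p →
    0 < ∑ i : Fin (N + 1), (v (p i, s i) - v (p (i - 1), s i))

/-- `v` satisfies strong graph-monotonicity (SGM) on the communication graph `E`:
for every path `(s 0, p 0, …, s N, p N)` with `N ≥ 1`,
`v(p 0, s 0) − v(p N, s 0) ≥ v(p 0, s 1) − v(p N, s 1)`, strictly when `N = 1`. -/
def SGMonotone {S P : Type*} (E : S → P → Prop) (v : P × S → ℝ) : Prop :=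
  ∀ N : ℕ, 1 ≤ N → ∀ (s : Fin (N + 1) → S) (p : Fin (N + 1) → P),
    IsCommPath E s p →
    (v (p 0, s 0) - v (p (Fin.last N), s 0) ≥ v (p 0, s 1) - v (p (Fin.last N), s 1)) ∧
    (N = 1 → v (p 0, s 0) - v (p (Fin.last N), s 0) > v (p 0, s 1) - v (p (Fin.last N), s 1))

theorem cyc_sum_eq {S P : Type*} (v : P × S → ℝ) (N : ℕ)
    (s : Fin (N + 1) → S) (p : Fin (N + 1) → P) :
    ∑ i : Fin (N + 1), (v (p i, s i) - v (p (i - 1), s i)) =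
      v (p 0, s 0) - v (p (Fin.last N), s 0) +
        ∑ i : Fin N, (v (p i.succ, s i.succ) - v (p i.castSucc, s i.succ)) := by
  rw [Fin.sum_univ_succ]
  have h0 : (0 : Fin (N + 1)) - 1 = Fin.last N := by
    rw [sub_eq_iff_eq_add]; simp
  have h1 : ∀ i : Fin N, i.succ - 1 = i.castSucc := by
    intro i
    rw [sub_eq_iff_eq_add, Fin.coeSucc_eq_succ]
  simp only [h0, h1]

/-- SGM implies graph monotonicity. -/
theorem sgMonotone_gMonotone {S P : Type*} [Fintype S] [Fintype P]
    (E : S → P → Prop) (v : P × S → ℝ)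
    (hSGM : SGMonotone E v) : GMonotone E v := by
  intro N hN
  induction N, hN using Nat.le_induction with
  | base =>
    intro s p h
    have h2 := (hSGM 1 le_rfl s p h).2 rfl
    rw [cyc_sum_eq]
    simp only [Fin.sum_univ_succ, Fin.sum_univ_zero] at *
    have e1 : (Fin.last 1) = 1 := rfl
    have e2 : (Fin.succ (0 : Fin 1)) = 1 := rfl
    have e3 : (Fin.castSucc (0 : Fin 1)) = 0 := rfl
    simp only [e1, e2, e3] at *
    linarith
  | succ N hN ih =>
    intro s p h
    have h2 := (hSGM (N + 1) (by omega) s p h).1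
    obtain ⟨hs, hp, hE, hE'⟩ := h
    have h3 := ih (fun i => s i.succ) (fun i => p i.succ)
      ⟨fun a b hab => Fin.succ_injective _ (hs hab),
        fun a b hab => Fin.succ_injective _ (hp hab),
        fun i => hE _, fun i => hE' i.succ⟩
    rw [cyc_sum_eq] at h3 ⊢
    rw [Fin.sum_univ_succ]
    simp only [Fin.succ_last, Fin.succ_zero_eq_one, Fin.castSucc_zero, ← Fin.succ_castSucc] at *
    linarith
end

section
/- Let G be a communication graph with states S and message-actions P, let A be a finite set of pure outcomes, and assign to each p ∈ P a probability distribution π_p on A. Let v : A × S → ℝ and define the affine extension v̄ : P × S → ℝ by v̄(p, s) := ∑_{a ∈ A} π_p(a) · v(a, s). Suppose v satisfies semi-local increasing differences (SLID) with respect to G: for every path (s_0, p_0, …, s_N, p_N) on G with N ≥ 1 and all a_0 ∈ supp π_{p_0}, a_N ∈ supp π_{p_N}, one has v(a_0, s_0) − v(a_N, s_0) ≥ v(a_0, s_1) − v(a_N, s_1), and when N = 1 this inequality is strict for at least one pair (a_0, a_1) ∈ supp π_{p_0} × supp π_{p_1}. Then v̄ satisfies strong graph-monotonicity on G. (The inclusion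 SLID ⊆ SGM asserted in Section 5.) -/
open Finset

/-- Difference of expectations as an expectation over the product. -/
lemma slid_aux_sum {A : Type*} [Fintype A] (x y f g : A → ℝ)
    (hx : ∑ a, x a = 1) (hy : ∑ a, y a = 1) :
    (∑ a, x a * f a - ∑ a, y a * f a) - (∑ a, x a * g a - ∑ a, y a * g a)
      = ∑ c : A × A, x c.1 * y c.2 * ((f c.1 - f c.2) - (g c.1 - g c.2)) := by
  have h1 : ∀ h : A → ℝ, ∑ c : A × A, x c.1 * y c.2 * h c.1 = ∑ a, x a * h a := by
    intro h
    rw [Fintype.sum_prod_type]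
    refine Finset.sum_congr rfl fun a _ => ?_
    have : ∀ b, x a * y b * h a = (x a * h a) * y b := fun b => by ring
    simp only [this, ← Finset.mul_sum, hy, mul_one]
  have h2 : ∀ h : A → ℝ, ∑ c : A × A, x c.1 * y c.2 * h c.2 = ∑ a, y a * h a := by
    intro h
    rw [Fintype.sum_prod_type_right]
    refine Finset.sum_congr rfl fun b _ => ?_
    have : ∀ a, x a * y b * h b = (y b * h b) * x a := fun a => by ring
    simp only [this, ← Finset.mul_sum, hx, mul_one]
  simp only [mul_sub, Finset.sum_sub_distrib, h1, h2]

/-- Semi-local increasing differences (SLID) implies that the affine extension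
`v̄(p, s) = ∑ a, π p a • v(a, s)` satisfies strong graph-monotonicity. -/
theorem slid_implies_sgm {S P A : Type*} [Fintype S] [Fintype P] [Fintype A]
    (E : S → P → Prop)
    (π : P → A → ℝ) (hπnn : ∀ p a, 0 ≤ π p a) (hπsum : ∀ p, ∑ a, π p a = 1)
    (v : A × S → ℝ)
    (hSLID : ∀ N : ℕ, 1 ≤ N → ∀ (s : Fin (N + 1) → S) (p : Fin (N + 1) → P),
      IsCommPath E s p →
      (∀ a0 aN : A, 0 < π (p 0) a0 → 0 < π (p (Fin.last N)) aN →
        v (a0, s 0) - v (aN, s 0) ≥ v (a0, s 1) - v (aN, s 1)) ∧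
      (N = 1 → ∃ a0 a1 : A, 0 < π (p 0) a0 ∧ 0 < π (p (Fin.last N)) a1 ∧
        v (a0, s 0) - v (a1, s 0) > v (a0, s 1) - v (a1, s 1))) :
    SGMonotone E (fun q => ∑ a, π q.1 a * v (a, q.2)) := by
  intro N hN s p hp
  obtain ⟨hw, hs⟩ := hSLID N hN s p hp
  have key := slid_aux_sum (π (p 0)) (π (p (Fin.last N))) (fun a => v (a, s 0))
    (fun a => v (a, s 1)) (hπsum _) (hπsum _)
  have hnn : ∀ c : A × A, 0 ≤ π (p 0) c.1 * π (p (Fin.last N)) c.2 *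
      ((v (c.1, s 0) - v (c.2, s 0)) - (v (c.1, s 1) - v (c.2, s 1))) := by
    intro c
    rcases (hπnn (p 0) c.1).eq_or_lt with h | h
    · simp [← h]
    rcases (hπnn (p (Fin.last N)) c.2).eq_or_lt with h' | h'
    · simp [← h']
    exact mul_nonneg (mul_pos h h').le (sub_nonneg.2 (hw _ _ h h'))
  constructor
  · refine sub_nonneg.1 ?_
    exact key ▸ Finset.sum_nonneg fun c _ => hnn c
  · intro h1
    obtain ⟨a0, a1, h0, h1, hlt⟩ := hs h1
    refine sub_pos.1 ?_
    refine key ▸ Finset.sum_pos' (fun c _ => hnn c) ⟨(a0, a1), Finset.mem_univ _, ?_⟩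
    exact mul_pos (mul_pos h0 h1) (sub_pos.2 hlt)
end

section
/- Let X be a type, N ≥ 2 a natural number, x_1, …, x_N ∈ X, u : X → ℝ, v_1, …, v_N : X → ℝ, and ε > 0. Set x_0 := x_N. If u(x_i) − u(x_{i−1}) + ε·(v_i(x_i) − v_i(x_{i−1})) = 0 for all i = 2, …, N, and u(x_N) − u(x_1) + ε·(v_1(x_N) − v_1(x_1)) ≤ 0, then ∑_{i=1}^{N} ( v_i(x_i) − v_i(x_{i−1}) ) ≥ 0. (This is the key computation in the necessity direction of the main theorem: a family of sender-incentive-compatible approximating actions along a path of indifferences forces the cyclic graph-monotonicity sum to be nonnegative; hence graph monotonicity is necessary for 𝒪-stability.) -/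
open Finset

/-- Necessity computation: if along a cycle of message-actions `x 1, …, x N`
(with `x 0 := x N`) the sender in state `i` is indifferent between `x (i-1)` and `x i`
for `i = 2, …, N`, and the sender in state `1` weakly prefers `x 1` to `x N`, then the
cyclic graph-monotonicity sum is nonnegative. -/
theorem cyclic_sum_nonneg_of_indifferences {X : Type*} (N : ℕ) (hN : 2 ≤ N)
    (x : ℕ → X) (u : X → ℝ) (v : ℕ → X → ℝ) (ε : ℝ) (hε : 0 < ε)
    (hx0 : x 0 = x N)
    (hindiff : ∀ i, 2 ≤ i → i ≤ N →
      u (x i) - u (x (i - 1)) + ε * (v i (x i) - v i (x (i - 1))) = 0)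
    (hpref : u (x N) - u (x 1) + ε * (v 1 (x N) - v 1 (x 1)) ≤ 0) :
    0 ≤ ∑ i ∈ Finset.Icc 1 N, (v i (x i) - v i (x (i - 1))) := by
  have key : ∀ n, 1 ≤ n → n ≤ N →
      0 ≤ u (x n) - u (x 0) + ε * ∑ i ∈ Finset.Icc 1 n, (v i (x i) - v i (x (i - 1))) := by
    intro n hn
    induction n, hn using Nat.le_induction with
    | base =>
      intro _
      simp only [Finset.Icc_self, Finset.sum_singleton, Nat.sub_self]
      rw [hx0]
      linarith
    | succ k hk ih =>
      intro hkN
      have h1 := ih (by omega)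
      have h2 := hindiff (k + 1) (by omega) hkN
      rw [Finset.sum_Icc_succ_top (by omega), mul_add]
      simp only [Nat.add_sub_cancel] at h2 ⊢
      linarith
  have h := key N (by omega) le_rfl
  rw [hx0, sub_self, zero_add] at h
  exact nonneg_of_mul_nonneg_right h hε
end

section
/- Let X be a type, N ≥ 2 a natural number, x_1, …, x_N ∈ X, u : X → ℝ, v_1, …, v_N : X → ℝ, and ε > 0. Set x_0 := x_N. If u(x_i) − u(x_{i−1}) + ε·(v_i(x_i) − v_i(x_{i−1})) = 0 for all i = 2, …, N, and ∑_{i=1}^{N} ( v_i(x_i) − v_i(x_{i−1}) ) > 0, then u(x_1) + ε·v_1(x_1) > u(x_N) + ε·v_1(x_N). (This is the key computation in the sufficiency direction of the main theorem: along a chain of neighbouring indifferences, strict graph-monotonicity of the modification generates a strict preference for neighbouring message-actions over non-neighbouring ones.) -/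
open Finset

/-- Sufficiency computation: if along a cycle of message-actions `x 1, …, x N`
(with `x 0 := x N`) the sender in state `i` is indifferent between `x (i-1)` and `x i`
for `i = 2, …, N`, and the cyclic graph-monotonicity sum is strictly positive, then the
sender in state `1` strictly prefers `x 1` to `x N`. -/
theorem strict_pref_of_gMonotone_sum {X : Type*} (N : ℕ) (hN : 2 ≤ N)
    (x : ℕ → X) (u : X → ℝ) (v : ℕ → X → ℝ) (ε : ℝ) (hε : 0 < ε)
    (hx0 : x 0 = x N)
    (hindiff : ∀ i, 2 ≤ i → i ≤ N →
      u (x i) - u (x (i - 1)) + ε * (v i (x i) - v i (x (i - 1))) = 0)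
    (hsum : 0 < ∑ i ∈ Finset.Icc 1 N, (v i (x i) - v i (x (i - 1)))) :
    u (x 1) + ε * v 1 (x 1) > u (x N) + ε * v 1 (x N) := by
  have key : ∀ n, 1 ≤ n → n ≤ N →
      ε * ∑ i ∈ Finset.Icc 1 n, (v i (x i) - v i (x (i - 1)))
        = ε * (v 1 (x 1) - v 1 (x 0)) - (u (x n) - u (x 1)) := by
    intro n hn
    induction n, hn using Nat.le_induction with
    | base => intro _; simp
    | succ n hn ih =>
      intro hle
      rw [Finset.sum_Icc_succ_top (by omega), mul_add, ih (by omega)]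
      have h := hindiff (n + 1) (by omega) hle
      rw [Nat.add_sub_cancel] at h ⊢
      linarith
  have h := key N (by omega) le_rfl
  have hpos := mul_pos hε hsum
  rw [h, hx0] at hpos
  linarith
end

section
/- Let S be a finite state set, M a message set, ψ : M → S a bijection, ℓ : S → ℝ with ℓ(s) < 0 for all s, and v_LA the lying-aversion modification. Let G be a communication graph on states S and message-actions M whose edge relation contains (θ_1, m_1), (θ_2, m_1) and (θ_2, m_2), where θ_1 ≠ θ_2 and m_1 ≠ m_2. If v_LA is G-monotone, then ψ(m_1) = θ_1 or ψ(m_2) = θ_2. (Lemma: N-shaped subgraphs.) -/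
open Finset

/-- The lying-aversion modification: message `m` is the claim `the state is ψ m`;
telling the truth is free, any lie in state `s` costs `ℓ s < 0`. -/
def vLA {M S : Type*} [DecidableEq S] (ψ : M ≃ S) (ℓ : S → ℝ) : M × S → ℝ :=
  fun q => if ψ q.1 = q.2 then 0 else ℓ q.2

/-- N-shaped subgraphs lemma: if states `θ1, θ2` both send `m1` and `θ2` also sends `m2`,
and the lying-aversion modification is G-monotone, then `ψ m1 = θ1` or `ψ m2 = θ2`. -/
theorem n_shaped_subgraph {S M : Type*} [Fintype S] [Fintype M] [DecidableEq S]
    (ψ : M ≃ S) (ℓ : S → ℝ) (hℓ : ∀ s, ℓ s < 0)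
    (E : S → M → Prop) (θ1 θ2 : S) (m1 m2 : M)
    (hθ : θ1 ≠ θ2) (hm : m1 ≠ m2)
    (h11 : E θ1 m1) (h21 : E θ2 m1) (h22 : E θ2 m2)
    (hGM : GMonotone E (vLA ψ ℓ)) :
    ψ m1 = θ1 ∨ ψ m2 = θ2 := by
  have h := hGM 1 le_rfl ![θ1, θ2] ![m1, m2] ⟨?_, ?_, ?_, ?_⟩
  · by_contra hc
    push Not at hc
    obtain ⟨h1, h2⟩ := hc
    have e0 : (0 : Fin 2) - 1 = 1 := by decide
    have e1 : (1 : Fin 2) - 1 = 0 := by decide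
    have a1 := hℓ θ1
    have a2 := hℓ θ2
    rw [Fin.sum_univ_two, e0, e1] at h
    have h' : 0 < (vLA ψ ℓ (m1, θ1) - vLA ψ ℓ (m2, θ1))
        + (vLA ψ ℓ (m2, θ2) - vLA ψ ℓ (m1, θ2)) := h
    have b1 : vLA ψ ℓ (m1, θ1) = ℓ θ1 := if_neg h1
    have b2 : vLA ψ ℓ (m2, θ2) = ℓ θ2 := if_neg h2
    have c : ∀ m s, ℓ s ≤ vLA ψ ℓ (m, s) := by
      intro m s
      unfold vLA
      split_ifs
      · exact (hℓ s).le
      · exact le_rfl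
    linarith [c m2 θ1, c m1 θ2]
  · intro i j hij
    fin_cases i <;> fin_cases j <;> simp_all [eq_comm]
  · intro i j hij
    fin_cases i <;> fin_cases j <;> simp_all [eq_comm]
  · intro i
    fin_cases i
    · exact h11
    · exact h22
  · intro i
    fin_cases i
    exact h21
end

section
/- Let S be a finite state set, M a message set, ψ : M → S a bijection, ℓ : S → ℝ with ℓ(s) < 0 for all s, and v_LA the lying-aversion modification. Let G be a communication graph on states S and message-actions M whose edge relation contains (θ_1, m_1), (θ_2, m_1), (θ_2, m_2), (θ_3, m_2) and (θ_3, m_3), where θ_1, θ_2, θ_3 are pairwise distinct states and m_1, m_2, m_3 are pairwise distinct messages. Then v_LA is not G-monotone. (Impossibility of the first forbidden subgraph in the proof of the lying-aversion characterization.) -/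
open Finset

theorem two_path {S M : Type*} (E : S → M → Prop) (v : M × S → ℝ) (h : GMonotone E v)
    (a b : S) (x y : M) (hab : a ≠ b) (hxy : x ≠ y) (h1 : E a x) (h2 : E b x) (h3 : E b y) :
    0 < (v (x, a) - v (y, a)) + (v (y, b) - v (x, b)) := by
  have := h 1 le_rfl ![a, b] ![x, y] ⟨?_, ?_, ?_, ?_⟩
  · simp [Fin.sum_univ_two] at this
    linarith
  · intro i j hij
    fin_cases i <;> fin_cases j <;> simp_all
  · intro i j hij
    fin_cases i <;> fin_cases j <;> simp_all
  · intro i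
    fin_cases i <;> simp_all
  · intro i
    fin_cases i
    simpa using h2

/-- Impossibility of the first forbidden subgraph: if the edge relation contains
`(θ1,m1), (θ2,m1), (θ2,m2), (θ3,m2), (θ3,m3)` with pairwise-distinct states and
pairwise-distinct messages, then the lying-aversion modification is not G-monotone. -/
theorem forbidden_subgraph_one {S M : Type*} [Fintype S] [Fintype M] [DecidableEq S]
    (ψ : M ≃ S) (ℓ : S → ℝ) (hℓ : ∀ s, ℓ s < 0)
    (E : S → M → Prop) (θ1 θ2 θ3 : S) (m1 m2 m3 : M)
    (hθ12 : θ1 ≠ θ2) (hθ13 : θ1 ≠ θ3) (hθ23 : θ2 ≠ θ3)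
    (hm12 : m1 ≠ m2) (hm13 : m1 ≠ m3) (hm23 : m2 ≠ m3)
    (h11 : E θ1 m1) (h21 : E θ2 m1) (h22 : E θ2 m2) (h32 : E θ3 m2) (h33 : E θ3 m3) :
    ¬ GMonotone E (vLA ψ ℓ) := by
  intro h
  have A := two_path E _ h θ1 θ2 m1 m2 hθ12 hm12 h11 h21 h22
  have B := two_path E _ h θ2 θ3 m2 m3 hθ23 hm23 h22 h32 h33
  have D := two_path E _ h θ3 θ2 m2 m1 hθ23.symm hm12.symm h32 h22 h21
  have k1 := hℓ θ1
  have k2 := hℓ θ2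
  have k3 := hℓ θ3
  have e12 : ψ m1 ≠ ψ m2 := fun e => hm12 (ψ.injective e)
  have e13 : ψ m1 ≠ ψ m3 := fun e => hm13 (ψ.injective e)
  have e23 : ψ m2 ≠ ψ m3 := fun e => hm23 (ψ.injective e)
  simp only [vLA] at A B D
  grind
end

section
/- Let S be a finite state set, M a message set, ψ : M → S a bijection, ℓ : S → ℝ with ℓ(s) < 0 for all s, and v_LA the lying-aversion modification. Let G be a communication graph on states S and message-actions M whose edge relation contains (θ_1, m_1), (θ_2, m_1), (θ_2, m_2), (θ_3, m_2) and (θ_4, m_2), where θ_1, θ_2, θ_3, θ_4 are pairwise distinct states and m_1 ≠ m_2. Then v_LA is not G-monotone. (Impossibility of the second forbidden subgraph in the proof of the lying-aversion characterization.) -/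
open Finset

/-- Impossibility of the second forbidden subgraph: if the edge relation contains
`(θ1,m1), (θ2,m1), (θ2,m2), (θ3,m2), (θ4,m2)` with pairwise-distinct states and
`m1 ≠ m2`, then the lying-aversion modification is not G-monotone. -/
theorem forbidden_subgraph_two {S M : Type*} [Fintype S] [Fintype M] [DecidableEq S]
    (ψ : M ≃ S) (ℓ : S → ℝ) (hℓ : ∀ s, ℓ s < 0)
    (E : S → M → Prop) (θ1 θ2 θ3 θ4 : S) (m1 m2 : M)
    (hθ12 : θ1 ≠ θ2) (hθ13 : θ1 ≠ θ3) (hθ14 : θ1 ≠ θ4)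
    (hθ23 : θ2 ≠ θ3) (hθ24 : θ2 ≠ θ4) (hθ34 : θ3 ≠ θ4)
    (hm12 : m1 ≠ m2)
    (h11 : E θ1 m1) (h21 : E θ2 m1) (h22 : E θ2 m2) (h32 : E θ3 m2) (h42 : E θ4 m2) :
    ¬ GMonotone E (vLA ψ ℓ) := by
  intro h
  have key : ∀ a b : S, ∀ p q : M, a ≠ b → p ≠ q → E a p → E b q → E b p →
      0 < (vLA ψ ℓ (p, a) - vLA ψ ℓ (q, a)) + (vLA ψ ℓ (q, b) - vLA ψ ℓ (p, b)) := by
    intro a b p q hab hpq h1 h2 h3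
    have := h 1 le_rfl ![a, b] ![p, q] ⟨?_, ?_, ?_, ?_⟩
    · simp [Fin.sum_univ_two] at this
      linarith
    · intro i j hij
      fin_cases i <;> fin_cases j <;> simp_all
    · intro i j hij
      fin_cases i <;> fin_cases j <;> simp_all
    · intro i
      fin_cases i <;> simpa
    · intro i
      fin_cases i
      simpa
  have k1 := key θ1 θ2 m1 m2 hθ12 hm12 h11 h22 h21
  have k3 := key θ3 θ2 m2 m1 hθ23.symm hm12.symm h32 h21 h22
  have k4 := key θ4 θ2 m2 m1 hθ24.symm hm12.symm h42 h21 h22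
  have hψ : ψ m1 ≠ ψ m2 := fun e => hm12 (ψ.injective e)
  have l1 := hℓ θ1
  have l2 := hℓ θ2
  have l3 := hℓ θ3
  have l4 := hℓ θ4
  clear h key
  simp only [vLA] at k1 k3 k4
  grind
end

section
/- Let S be a finite state set with at least two elements, M a message set, ψ : M → S a bijection, and ℓ : S → ℝ with ℓ(s) < 0 for all s. Fix a state s̄ ∈ S, let m̄ := ψ⁻¹(s̄), and let m_∅ ∈ M with m_∅ ≠ m̄. Let G be the single-disclosure communication graph on states S and message-actions {m̄, m_∅} whose edge relation is E = { (s, m_∅) : s ∈ S } ∪ { (s̄, m̄) }. Then the lying-aversion modification v_LA satisfies strong graph-monotonicity on G; in particular v_LA is G-monotone. (One direction of the proposition characterizing lying-aversion-stabilized communication graphs: single-disclosure graphs.) -/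
open Finset

/-- The single-disclosure edge relation: every state sends `m∅`, and the distinguished
state `s̄` also sends the truthful message `m̄ = ψ⁻¹ s̄`. -/
def singleDisclosureE {S M : Type*} (ψ : M ≃ S) (sbar : S) (mempty : M) :
    S → M → Prop :=
  fun s m => m = mempty ∨ (s = sbar ∧ m = ψ.symm sbar)

/-- Every path of positive length is `(s₀, m∅, s̄, m̄)` with `s₀ ≠ s̄`. -/
lemma single_disclosure_path {S M : Type*} (ψ : M ≃ S) (sbar : S) (mempty : M)
    {N : ℕ} (hN : 1 ≤ N) (s : Fin (N + 1) → S) (p : Fin (N + 1) → M)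
    (h : IsCommPath (singleDisclosureE ψ sbar mempty) s p) : N = 1 := by
  obtain ⟨-, hp, hE, -⟩ := h
  by_contra hne
  have h2 : 2 ≤ N := by omega
  have key : ∀ i, p i = mempty ∨ p i = ψ.symm sbar := fun i => (hE i).imp id And.right
  have a01 : p ⟨0, by omega⟩ ≠ p ⟨1, by omega⟩ := fun e => by simpa using hp e
  have a02 : p ⟨0, by omega⟩ ≠ p ⟨2, by omega⟩ := fun e => by simpa using hp e
  have a12 : p ⟨1, by omega⟩ ≠ p ⟨2, by omega⟩ := fun e => by simpa using hp e
  have k0 := key ⟨0, by omega⟩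
  have k1 := key ⟨1, by omega⟩
  have k2 := key ⟨2, by omega⟩
  grind

lemma single_disclosure_strict {S M : Type*} [DecidableEq S]
    (ψ : M ≃ S) (ℓ : S → ℝ) (hℓ : ∀ s, ℓ s < 0)
    (sbar : S) (mempty : M) (hne : mempty ≠ ψ.symm sbar)
    (s : Fin (1 + 1) → S) (p : Fin (1 + 1) → M)
    (h : IsCommPath (singleDisclosureE ψ sbar mempty) s p) :
    vLA ψ ℓ (p 0, s 1) - vLA ψ ℓ (p 1, s 1) < vLA ψ ℓ (p 0, s 0) - vLA ψ ℓ (p 1, s 0) := by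
  obtain ⟨hs, hp, hE, hE'⟩ := h
  have s01 : s 0 ≠ s 1 := fun e => by simpa using hs e
  have p01 : p 0 ≠ p 1 := fun e => by simpa using hp e
  have e0 : p 0 = mempty ∨ (s 0 = sbar ∧ p 0 = ψ.symm sbar) := hE 0
  have e1 : p 1 = mempty ∨ (s 1 = sbar ∧ p 1 = ψ.symm sbar) := hE 1
  have e2 : p 0 = mempty ∨ (s 1 = sbar ∧ p 0 = ψ.symm sbar) := hE' 0
  have q0 : p 0 = mempty := by grind
  have q1 : s 1 = sbar ∧ p 1 = ψ.symm sbar := by grind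
  have hm : ψ mempty ≠ sbar := fun e => hne (by simp [← e])
  have hs0 : sbar ≠ s 0 := by rw [← q1.1]; exact s01.symm
  have l0 := hℓ (s 0)
  have l1 := hℓ sbar
  simp only [vLA, q0, q1.1, q1.2, Equiv.apply_symm_apply, if_neg hm, if_neg hs0, if_true]
  split_ifs <;> linarith

/-- On a single-disclosure communication graph, the lying-aversion modification satisfies
strong graph-monotonicity; in particular it is G-monotone. -/
theorem single_disclosure_stabilized {S M : Type*} [Fintype S] [Fintype M]
    [DecidableEq S] [Nontrivial S]
    (ψ : M ≃ S) (ℓ : S → ℝ) (hℓ : ∀ s, ℓ s < 0)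
    (sbar : S) (mempty : M) (hne : mempty ≠ ψ.symm sbar) :
    SGMonotone (singleDisclosureE ψ sbar mempty) (vLA ψ ℓ) ∧
      GMonotone (singleDisclosureE ψ sbar mempty) (vLA ψ ℓ) := by
  constructor
  · intro N hN s p h
    obtain rfl := single_disclosure_path ψ sbar mempty hN s p h
    have := single_disclosure_strict ψ ℓ hℓ sbar mempty hne s p h
    exact ⟨this.le, fun _ => this⟩
  · intro N hN s p h
    obtain rfl := single_disclosure_path ψ sbar mempty hN s p h
    have := single_disclosure_strict ψ ℓ hℓ sbar mempty hne s p h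
    rw [Fin.sum_univ_two]
    have h1 : (0 - 1 : Fin (1 + 1)) = 1 := by decide
    have h2 : (1 - 1 : Fin (1 + 1)) = 0 := by decide
    rw [h1, h2]
    linarith
end

section
/- Let S = {s*, θ_1, …, θ_n} be a finite state set with n ≥ 1 and all listed states pairwise distinct, M a message set, ψ : M → S a bijection, and ℓ : S → ℝ with ℓ(s) < 0 for all s. Let m* := ψ⁻¹(s*) and m_i := ψ⁻¹(θ_i) for each i. Let G be the partial-revelation communication graph on states S and message-actions {m*, m_1, …, m_n} whose edge relation is E = { (θ_i, m_i) : 1 ≤ i ≤ n } ∪ { (s*, m_i) : 1 ≤ i ≤ n } ∪ { (s*, m*) }. Then the lying-aversion modification v_LA satisfies strong graph-monotonicity on G; in particular v_LA is G-monotone. (One direction of the proposition characterizing lying-aversion-stabilized communication graphs: partial-revelation graphs.) -/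
open Finset

/-- The partial-revelation edge relation: each non-central state `θ i` sends its truthful
message `m i = ψ⁻¹ (θ i)`, and the central state `s*` sends every message, including its
truthful message `m* = ψ⁻¹ s*`. -/
def partialRevelationE {S M : Type*} {n : ℕ} (ψ : M ≃ S) (sstar : S) (θ : Fin n → S) :
    S → M → Prop :=
  fun s m =>
    (∃ i, s = θ i ∧ m = ψ.symm (θ i)) ∨
    (s = sstar ∧ ∃ i, m = ψ.symm (θ i)) ∨
    (s = sstar ∧ m = ψ.symm sstar)

theorem edge_truthful {S M : Type*} {n : ℕ} (ψ : M ≃ S) (sstar : S) (θ : Fin n → S)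
    {s : S} {m : M} (h : partialRevelationE ψ sstar θ s m) (hs : s ≠ sstar) : ψ m = s := by
  rcases h with ⟨i, rfl, rfl⟩ | ⟨h, _⟩ | ⟨h, _⟩
  · simp
  · exact absurd h hs
  · exact absurd h hs

theorem succ_central {S M : Type*} {n : ℕ} (ψ : M ≃ S) (sstar : S) (θ : Fin n → S)
    {N : ℕ} {s : Fin (N + 1) → S} {p : Fin (N + 1) → M}
    (h : IsCommPath (partialRevelationE ψ sstar θ) s p) (i : Fin N) : s i.succ = sstar := by
  obtain ⟨_, hp, h1, h2⟩ := h
  by_contra hne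
  have a := edge_truthful ψ sstar θ (h1 i.succ) hne
  have b := edge_truthful ψ sstar θ (h2 i) hne
  have c := hp (ψ.injective (a.trans b.symm))
  exact absurd c (Fin.castSucc_lt_succ).ne'

theorem path_length {S M : Type*} {n : ℕ} (ψ : M ≃ S) (sstar : S) (θ : Fin n → S)
    {N : ℕ} (hN : 1 ≤ N) {s : Fin (N + 1) → S} {p : Fin (N + 1) → M}
    (h : IsCommPath (partialRevelationE ψ sstar θ) s p) : N = 1 := by
  by_contra hne
  have a := succ_central ψ sstar θ h ⟨0, by omega⟩
  have b := succ_central ψ sstar θ h ⟨1, by omega⟩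
  have c := h.1 (a.trans b.symm)
  simp [Fin.ext_iff] at c

theorem key_ineq {S M : Type*} [DecidableEq S] {n : ℕ} (ψ : M ≃ S) (ℓ : S → ℝ)
    (hℓ : ∀ s, ℓ s < 0) (sstar : S) (θ : Fin n → S)
    {s : Fin (1 + 1) → S} {p : Fin (1 + 1) → M}
    (h : IsCommPath (partialRevelationE ψ sstar θ) s p) :
    vLA ψ ℓ (p 0, s 0) - vLA ψ ℓ (p 1, s 0) > vLA ψ ℓ (p 0, s 1) - vLA ψ ℓ (p 1, s 1) := by
  have a : s 1 = sstar := succ_central ψ sstar θ h 0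
  have h0 : s 0 ≠ sstar := fun e => absurd (h.1 (e.trans a.symm)) (by decide)
  have t := edge_truthful ψ sstar θ (h.2.2.1 0) h0
  have u : ψ (p 1) ≠ s 0 := fun e =>
    absurd (h.2.1 (ψ.injective (e.trans t.symm))) (by decide)
  have w : ψ (p 0) ≠ s 1 := by rw [t, a]; exact h0
  have l0 := hℓ (s 0)
  have l1 := hℓ (s 1)
  simp only [vLA, if_pos t, if_neg u, if_neg w]
  split_ifs <;> linarith

/-- On a partial-revelation communication graph, the lying-aversion modification satisfies
strong graph-monotonicity; in particular it is G-monotone. -/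
theorem partial_revelation_stabilized {S M : Type*} [Fintype S] [Fintype M]
    [DecidableEq S]
    (n : ℕ) (hn : 1 ≤ n)
    (ψ : M ≃ S) (ℓ : S → ℝ) (hℓ : ∀ s, ℓ s < 0)
    (sstar : S) (θ : Fin n → S)
    (hθinj : Function.Injective θ) (hθstar : ∀ i, θ i ≠ sstar)
    (hcover : ∀ s : S, s = sstar ∨ ∃ i, s = θ i) :
    SGMonotone (partialRevelationE ψ sstar θ) (vLA ψ ℓ) ∧
      GMonotone (partialRevelationE ψ sstar θ) (vLA ψ ℓ) := by
  constructor
  · intro N hN s p h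
    obtain rfl := path_length ψ sstar θ hN h
    have k := key_ineq ψ ℓ hℓ sstar θ h
    exact ⟨k.le, fun _ => k⟩
  · intro N hN s p h
    obtain rfl := path_length ψ sstar θ hN h
    have k := key_ineq ψ ℓ hℓ sstar θ h
    have e0 : (0 : Fin (1 + 1)) - 1 = 1 := by decide
    have e1 : (1 : Fin (1 + 1)) - 1 = 0 := by decide
    rw [Fin.sum_univ_two, e0, e1]
    linarith
end

section
/- Let G be a communication graph with finite state set S and exactly two message-actions p_0 ≠ p_1. Suppose there is a distinguished state s* adjacent to both p_0 and p_1, every other state is adjacent to exactly one of p_0, p_1, and no state other than s* is adjacent to both. For v : {p_0, p_1} × S → ℝ write d(s) := v(p_1, s) − v(p_0, s). Then v is G-monotone if and only if d(s) < d(s*) for every state s ≠ s* adjacent to p_0, and d(s') > d(s*) for every state s' ≠ s* adjacent to p_1. (Two-message characterization of graph monotonicity underlying the analysis of uncooperative empathy in the vertically differentiated salesperson example.) -/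
open Finset

/-- Two-message characterization of graph monotonicity: with exactly two message-actions
`p0 ≠ p1`, a distinguished state `s*` adjacent to both, and every other state adjacent to
exactly one of them, `v` is G-monotone iff, writing `d s = v (p1, s) − v (p0, s)`,
`d s < d s*` for every `s ≠ s*` adjacent to `p0` and `d s' > d s*` for every `s' ≠ s*`
adjacent to `p1`. -/
theorem two_message_gMonotone_iff {S P : Type*} [Fintype S] [Fintype P]
    (p0 p1 : P) (hp : p0 ≠ p1) (hP : ∀ p : P, p = p0 ∨ p = p1)
    (E : S → P → Prop) (sstar : S)
    (h0 : E sstar p0) (h1 : E sstar p1)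
    (hother : ∀ s, s ≠ sstar → (E s p0 ∨ E s p1) ∧ ¬ (E s p0 ∧ E s p1))
    (v : P × S → ℝ) :
    GMonotone E v ↔
      ((∀ s, s ≠ sstar → E s p0 →
          v (p1, s) - v (p0, s) < v (p1, sstar) - v (p0, sstar)) ∧
       (∀ s', s' ≠ sstar → E s' p1 →
          v (p1, s') - v (p0, s') > v (p1, sstar) - v (p0, sstar))) := by
  constructor
  · intro h
    constructor
    · intro s hs hE
      have key := h 1 le_rfl ![s, sstar] ![p0, p1] ⟨?_, ?_, ?_, ?_⟩
      · simp [Fin.sum_univ_two] at key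
        linarith
      · intro i j hij
        fin_cases i <;> fin_cases j <;> simp_all
      · intro i j hij
        fin_cases i <;> fin_cases j <;> simp_all
      · intro i
        fin_cases i <;> simp_all
      · intro i
        fin_cases i
        simpa using h0
    · intro s hs hE
      have key := h 1 le_rfl ![s, sstar] ![p1, p0] ⟨?_, ?_, ?_, ?_⟩
      · simp [Fin.sum_univ_two] at key
        linarith
      · intro i j hij
        fin_cases i <;> fin_cases j <;> simp_all
      · intro i j hij
        fin_cases i <;> fin_cases j <;> simp_all
      · intro i
        fin_cases i <;> simp_all
      · intro i
        fin_cases i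
        simpa using h1
  · rintro ⟨ha, hb⟩ N hN s p ⟨hs, hpi, hE, hE'⟩
    have hN1 : N = 1 := by
      by_contra hne
      have e01 : p ⟨0, by omega⟩ ≠ p ⟨1, by omega⟩ := fun e => by
        simpa using hpi e
      have e02 : p ⟨0, by omega⟩ ≠ p ⟨2, by omega⟩ := fun e => by
        simpa using hpi e
      have e12 : p ⟨1, by omega⟩ ≠ p ⟨2, by omega⟩ := fun e => by
        simpa using hpi e
      rcases hP (p ⟨0, by omega⟩) with a | a <;> rcases hP (p ⟨1, by omega⟩) with b | b <;>
        rcases hP (p ⟨2, by omega⟩) with c | c <;> simp_all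
    subst hN1
    have hp01 : p 0 ≠ p 1 := fun e => by simpa using hpi e
    have hs01 : s 0 ≠ s 1 := fun e => by simpa using hs e
    have E0 := hE 0
    have E1 := hE 1
    have E2 : E (s 1) (p 0) := by simpa using hE' 0
    have hm : (0 : Fin 2) - 1 = 1 := by decide
    have hm' : (1 : Fin 2) - 1 = 0 := by decide
    have hst : s 1 = sstar := by
      by_contra hne
      have := (hother _ hne).2
      rcases hP (p 0) with a | a <;> rcases hP (p 1) with b | b <;> simp_all
    rw [hst] at hs01
    rw [Fin.sum_univ_two, hm, hm', hst]
    rcases hP (p 0) with a | a <;> rcases hP (p 1) with b | b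
    · exact absurd (a.trans b.symm) hp01
    · rw [a] at E0
      have := ha _ hs01 E0
      rw [a, b]
      linarith
    · rw [a] at E0
      have := hb _ hs01 E0
      rw [a, b]
      linarith
    · exact absurd (a.trans b.symm) hp01
end

section
/- Let Θ be a finite linearly ordered set, A a finite set, and u_R : A × Θ → ℝ a ≻-single-crossing receiver utility: for all distinct a, a' ∈ A the map θ ↦ u_R(a, θ) − u_R(a', θ) is strictly monotone (either strictly increasing or strictly decreasing). Let θ* ∈ Θ, and let ν_0 and ν_N be probability distributions on Θ with supp ν_0 ⊆ { θ : θ ≤ θ* } and supp ν_N ⊆ { θ : θ ≥ θ* }, such that ν_0 and ν_N are not both equal to the point mass at θ*. Suppose a_0 ∈ A maximizes a ↦ ∑_θ ν_0(θ)·u_R(a, θ) over A, a_N ∈ A maximizes a ↦ ∑_θ ν_N(θ)·u_R(a, θ) over A, and a_0 ≠ a_N. Then the map θ ↦ u_R(a_0, θ) − u_R(a_N, θ) is strictly decreasing. (The key single-crossing step in the proof that empathy stabilizes ≻-interval candidate equilibria.) -/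
open Finset

theorem point_mass_aux {Θ : Type*} [Fintype Θ] [DecidableEq Θ] (t : Θ) (ν g : Θ → ℝ)
    (hsum : ∑ θ, ν θ = 1) (hnn : ∀ θ, 0 ≤ ν θ * g θ) (hle : ∑ θ, ν θ * g θ ≤ 0)
    (hg : ∀ θ, θ ≠ t → g θ ≠ 0) : ∀ θ, ν θ = if θ = t then 1 else 0 := by
  have h0 : ∑ θ, ν θ * g θ = 0 := le_antisymm hle (Finset.sum_nonneg fun θ _ => hnn θ)
  rw [Finset.sum_eq_zero_iff_of_nonneg (fun θ _ => hnn θ)] at h0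
  have hz : ∀ θ, θ ≠ t → ν θ = 0 := fun θ hθ =>
    (mul_eq_zero.mp (h0 θ (Finset.mem_univ θ))).resolve_right (hg θ hθ)
  have h1 : ν t = 1 := by
    rw [← hsum]
    exact (Finset.sum_eq_single t (fun b _ hb => hz b hb) (by simp)).symm
  intro θ
  split_ifs with h
  · rw [h, h1]
  · exact hz θ h

/-- The key single-crossing step in the proof that empathy stabilizes interval candidate
equilibria: if the receiver utility is single crossing, `ν0` is supported below `θ*`,
`νN` is supported above `θ*`, they are not both the point mass at `θ*`, and `a0 ≠ aN`
are respective best responses, then `θ ↦ u_R(a0, θ) − u_R(aN, θ)` is strictly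
decreasing. -/
theorem single_crossing_best_response_strictAnti {Θ A : Type*}
    [Fintype Θ] [LinearOrder Θ] [Fintype A]
    (uR : A × Θ → ℝ)
    (hsc : ∀ a a' : A, a ≠ a' →
      StrictMono (fun θ => uR (a, θ) - uR (a', θ)) ∨
      StrictAnti (fun θ => uR (a, θ) - uR (a', θ)))
    (θstar : Θ) (ν0 νN : Θ → ℝ)
    (hν0nn : ∀ θ, 0 ≤ ν0 θ) (hν0sum : ∑ θ, ν0 θ = 1)
    (hνNnn : ∀ θ, 0 ≤ νN θ) (hνNsum : ∑ θ, νN θ = 1)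
    (hν0supp : ∀ θ, 0 < ν0 θ → θ ≤ θstar)
    (hνNsupp : ∀ θ, 0 < νN θ → θstar ≤ θ)
    (hnotboth : ¬ ((∀ θ, ν0 θ = if θ = θstar then 1 else 0) ∧
                   (∀ θ, νN θ = if θ = θstar then 1 else 0)))
    (a0 aN : A) (hne : a0 ≠ aN)
    (ha0 : ∀ a : A, ∑ θ, ν0 θ * uR (a, θ) ≤ ∑ θ, ν0 θ * uR (a0, θ))
    (haN : ∀ a : A, ∑ θ, νN θ * uR (a, θ) ≤ ∑ θ, νN θ * uR (aN, θ)) :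
    StrictAnti (fun θ => uR (a0, θ) - uR (aN, θ)) := by
  rcases hsc a0 aN hne with hm | hm
  swap
  · exact hm
  exfalso
  set f : Θ → ℝ := fun θ => uR (a0, θ) - uR (aN, θ) with hf
  have e0 : 0 ≤ ∑ θ, ν0 θ * f θ := by
    have := ha0 aN
    simp only [hf, mul_sub, Finset.sum_sub_distrib]
    linarith
  have eN : ∑ θ, νN θ * f θ ≤ 0 := by
    have := haN a0
    simp only [hf, mul_sub, Finset.sum_sub_distrib]
    linarith
  have n0 : ∀ θ, 0 ≤ ν0 θ * (f θstar - f θ) := by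
    intro θ
    rcases (hν0nn θ).eq_or_lt with h | h
    · simp [← h]
    · exact mul_nonneg h.le (sub_nonneg.mpr (hm.monotone (hν0supp θ h)))
  have nN : ∀ θ, 0 ≤ νN θ * (f θ - f θstar) := by
    intro θ
    rcases (hνNnn θ).eq_or_lt with h | h
    · simp [← h]
    · exact mul_nonneg h.le (sub_nonneg.mpr (hm.monotone (hνNsupp θ h)))
  have s0 : ∑ θ, ν0 θ * (f θstar - f θ) = f θstar - ∑ θ, ν0 θ * f θ := by
    simp only [mul_sub, Finset.sum_sub_distrib, ← Finset.sum_mul, hν0sum, one_mul]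
  have sN : ∑ θ, νN θ * (f θ - f θstar) = ∑ θ, νN θ * f θ - f θstar := by
    simp only [mul_sub, Finset.sum_sub_distrib, ← Finset.sum_mul, hνNsum, one_mul]
  have p0 := Finset.sum_nonneg fun θ (_ : θ ∈ Finset.univ) => n0 θ
  have pN := Finset.sum_nonneg fun θ (_ : θ ∈ Finset.univ) => nN θ
  refine hnotboth ⟨point_mass_aux θstar ν0 _ hν0sum n0 (by linarith) ?_,
    point_mass_aux θstar νN _ hνNsum nN (by linarith) ?_⟩
  · intro θ hθ h
    exact hθ (hm.injective (sub_eq_zero.mp h)).symm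
  · intro θ hθ h
    exact hθ (hm.injective (sub_eq_zero.mp h))
end

section
/- Let A be a finite set, M a type, Θ a finite set, u^0 : A × M → ℝ, u_R : A × Θ → ℝ, and ε > 0. For probability distributions p_0, p_1 on A, messages m_0, m_1 ∈ M and states θ_0, θ_1 ∈ Θ, write U_S(p, m, θ) := ∑_a p(a)·( u^0(a, m) − ε·u_R(a, θ) ) and Ū_R(p, θ) := ∑_a p(a)·u_R(a, θ). If Ū_R(p_0, θ_0) > Ū_R(p_1, θ_0) and Ū_R(p_1, θ_1) ≥ Ū_R(p_0, θ_1), then it is not the case that both U_S(p_0, m_0, θ_0) ≥ U_S(p_1, m_1, θ_0) and U_S(p_1, m_1, θ_1) ≥ U_S(p_0, m_0, θ_1) hold. (The incentive-compatibility contradiction at the core of the proof that a slightly antipathetic sender — utility u^0 − ε·u_R — admits no persuasive equilibrium.) -/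
open Finset

/-- The incentive-compatibility contradiction at the core of the proof that a slightly
antipathetic sender (utility `u⁰ − ε·u_R`) admits no persuasive equilibrium: if the
receiver strictly prefers `p0` to `p1` in state `θ0` and weakly prefers `p1` to `p0` in
state `θ1`, then the two sender incentive-compatibility inequalities cannot both hold. -/
theorem antipathy_ic_contradiction {A M Θ : Type*} [Fintype A]
    (u0 : A × M → ℝ) (uR : A × Θ → ℝ) (ε : ℝ) (hε : 0 < ε)
    (p0 p1 : A → ℝ)
    (hp0nn : ∀ a, 0 ≤ p0 a) (hp0sum : ∑ a, p0 a = 1)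
    (hp1nn : ∀ a, 0 ≤ p1 a) (hp1sum : ∑ a, p1 a = 1)
    (m0 m1 : M) (θ0 θ1 : Θ)
    (hR0 : ∑ a, p1 a * uR (a, θ0) < ∑ a, p0 a * uR (a, θ0))
    (hR1 : ∑ a, p0 a * uR (a, θ1) ≤ ∑ a, p1 a * uR (a, θ1)) :
    ¬ ((∑ a, p1 a * (u0 (a, m1) - ε * uR (a, θ0)) ≤
          ∑ a, p0 a * (u0 (a, m0) - ε * uR (a, θ0))) ∧
       (∑ a, p0 a * (u0 (a, m0) - ε * uR (a, θ1)) ≤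
          ∑ a, p1 a * (u0 (a, m1) - ε * uR (a, θ1)))) := by
  rintro ⟨h0, h1⟩
  have key : ∀ (p : A → ℝ) (m : M) (θ : Θ),
      ∑ a, p a * (u0 (a, m) - ε * uR (a, θ)) =
        ∑ a, p a * u0 (a, m) - ε * ∑ a, p a * uR (a, θ) := by
    intro p m θ
    rw [Finset.mul_sum, ← Finset.sum_sub_distrib]
    exact Finset.sum_congr rfl fun a _ => by ring
  rw [key, key] at h0 h1
  have e0 := mul_lt_mul_of_pos_left hR0 hε
  have e1 := mul_le_mul_of_nonneg_left hR1 hε.le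
  linarith
end

section
/- Consider a finite sender–receiver cheap-talk/signalling game: a finite state set Θ, a finite action set A, a message set M, a prior μ given by a probability distribution on Θ, a receiver utility u_R : A × Θ → ℝ, a transparent sender payoff u^0 : A × M → ℝ, and ε > 0; the sender's utility from the receiver's mixed action p (a probability distribution on A) after message m in state θ is U_S(p, m, θ) := ∑_a p(a)·( u^0(a, m) − ε·u_R(a, θ) ). Then in every perfect Bayesian equilibrium of this game, for every on-path message m and every action a in the support of the receiver's response r(m), a maximizes a' ↦ ∑_θ μ(θ)·u_R(a', θ) over A; that is, no perfect Bayesian equilibrium is persuasive. (Proposition: with sender preference u^0 − ε·u_R for transparent u^0 and ε > 0, there is no persuasive equilibrium.) -/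
open Finset

/-- With sender preference `u⁰ − ε·u_R` (transparent `u⁰`, `ε > 0`), no perfect Bayesian
equilibrium is persuasive: in every PBE, every action in the support of the receiver's
response to an on-path message is a best response to the prior. -/
theorem antipathy_no_persuasive_equilibrium {Θ A M : Type*}
    [Fintype Θ] [Fintype A] [Fintype M]
    (μ : Θ → ℝ) (hμnn : ∀ θ, 0 ≤ μ θ) (hμsum : ∑ θ, μ θ = 1)
    (uR : A × Θ → ℝ) (u0 : A × M → ℝ) (ε : ℝ) (hε : 0 < ε)
    -- sender strategy
    (σ : Θ → M → ℝ) (hσnn : ∀ θ m, 0 ≤ σ θ m) (hσsum : ∀ θ, ∑ m, σ θ m = 1)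
    -- receiver beliefs and strategy
    (ν : M → Θ → ℝ) (hνnn : ∀ m θ, 0 ≤ ν m θ) (hνsum : ∀ m, ∑ θ, ν m θ = 1)
    (r : M → A → ℝ) (hrnn : ∀ m a, 0 ≤ r m a) (hrsum : ∀ m, ∑ a, r m a = 1)
    -- (i) sender optimality
    (hsender : ∀ θ, 0 < μ θ → ∀ m, 0 < σ θ m → ∀ m' : M,
      ∑ a, r m' a * (u0 (a, m') - ε * uR (a, θ)) ≤
        ∑ a, r m a * (u0 (a, m) - ε * uR (a, θ)))
    -- (ii) Bayes' rule on path
    (hbayes : ∀ m, 0 < ∑ θ, μ θ * σ θ m → ∀ θ,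
      ν m θ = μ θ * σ θ m / ∑ θ', μ θ' * σ θ' m)
    -- (iii) receiver optimality
    (hreceiver : ∀ m : M, ∀ a, 0 < r m a → ∀ a' : A,
      ∑ θ, ν m θ * uR (a', θ) ≤ ∑ θ, ν m θ * uR (a, θ)) :
    -- conclusion: no persuasion
    ∀ m, 0 < ∑ θ, μ θ * σ θ m → ∀ a, 0 < r m a → ∀ a' : A,
      ∑ θ, μ θ * uR (a', θ) ≤ ∑ θ, μ θ * uR (a, θ) := by
  classical
  intro m hm a ha a'
  set W : M → A → ℝ := fun m b => ∑ θ, μ θ * σ θ m * uR (b, θ) with hW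
  set U : M → ℝ := fun m => ∑ b, r m b * u0 (b, m) with hU
  -- receiver optimality, without normalization
  have hrec : ∀ m, 0 < ∑ θ, μ θ * σ θ m → ∀ b, 0 < r m b → ∀ b', W m b' ≤ W m b := by
    intro m hm b hb b'
    have h := hreceiver m b hb b'
    have key : ∀ c, ∑ θ, ν m θ * uR (c, θ) = W m c / ∑ θ', μ θ' * σ θ' m := by
      intro c
      simp only [hW]
      rw [Finset.sum_div]
      refine Finset.sum_congr rfl fun θ _ => ?_
      rw [hbayes m hm θ]
      ring
    rw [key, key] at h
    exact (div_le_div_iff_of_pos_right hm).1 h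
  -- value of the receiver after an on-path message
  have hval : ∀ m, 0 < ∑ θ, μ θ * σ θ m →
      ∀ b, W m b ≤ ∑ c, r m c * W m c := by
    intro m hm b
    calc W m b = ∑ c, r m c * W m b := by rw [← Finset.sum_mul, hrsum, one_mul]
      _ ≤ ∑ c, r m c * W m c := by
        refine Finset.sum_le_sum fun c _ => ?_
        rcases (hrnn m c).eq_or_lt with h | h
        · rw [← h]; simp
        · exact mul_le_mul_of_nonneg_left (hrec m hm c h b) h.le
  have hle : ∀ m m', 0 < ∑ θ, μ θ * σ θ m' →
      ∑ c, r m c * W m' c ≤ ∑ c, r m' c * W m' c := by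
    intro m m' hm'
    calc ∑ c, r m c * W m' c ≤ ∑ c, r m c * ∑ c, r m' c * W m' c :=
          Finset.sum_le_sum fun c _ => mul_le_mul_of_nonneg_left (hval m' hm' c) (hrnn m c)
      _ = _ := by rw [← Finset.sum_mul, hrsum, one_mul]
  -- averaging sender optimality over the types sending a message
  have hexp : ∀ m m', ∑ θ, μ θ * σ θ m' * ∑ c, r m c * (u0 (c, m) - ε * uR (c, θ)) =
      (∑ θ, μ θ * σ θ m') * U m - ε * ∑ c, r m c * W m' c := by
    intro m m'
    have h1 : ∑ c, r m c * W m' c = ∑ θ, μ θ * σ θ m' * ∑ c, r m c * uR (c, θ) := by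
      simp only [hW, Finset.mul_sum]
      rw [Finset.sum_comm]
      refine Finset.sum_congr rfl fun θ _ => Finset.sum_congr rfl fun c _ => ?_
      ring
    rw [h1, Finset.sum_mul, Finset.mul_sum, ← Finset.sum_sub_distrib]
    refine Finset.sum_congr rfl fun θ _ => ?_
    have h2 : ∑ c, r m c * (u0 (c, m) - ε * uR (c, θ)) = U m - ε * ∑ c, r m c * uR (c, θ) := by
      simp only [hU]
      rw [Finset.mul_sum, ← Finset.sum_sub_distrib]
      refine Finset.sum_congr rfl fun c _ => ?_
      ring
    rw [h2]
    ring
  have hsend : ∀ m m', (∑ θ, μ θ * σ θ m') * U m - ε * ∑ c, r m c * W m' c ≤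
      (∑ θ, μ θ * σ θ m') * U m' - ε * ∑ c, r m' c * W m' c := by
    intro m m'
    rw [← hexp, ← hexp]
    refine Finset.sum_le_sum fun θ _ => ?_
    rcases (hμnn θ).eq_or_lt with h | h
    · rw [← h]; simp
    rcases (hσnn θ m').eq_or_lt with h' | h'
    · rw [← h']; simp
    exact mul_le_mul_of_nonneg_left (hsender θ h m' h' m) (mul_pos h h').le
  have hUle : ∀ m m', 0 < ∑ θ, μ θ * σ θ m' → U m ≤ U m' := by
    intro m m' hm'
    have h1 := hsend m m'
    have h2 := mul_le_mul_of_nonneg_left (hle m m' hm') hε.le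
    exact le_of_mul_le_mul_left (by linarith) hm'
  have hfin : ∀ m', W m' a' ≤ W m' a := by
    intro m'
    have hnn : ∀ θ, 0 ≤ μ θ * σ θ m' := fun θ => mul_nonneg (hμnn θ) (hσnn θ m')
    rcases (Finset.sum_nonneg fun θ (_ : θ ∈ Finset.univ) => hnn θ).eq_or_lt with h | hm'
    · have h0 := (Finset.sum_eq_zero_iff_of_nonneg fun θ _ => hnn θ).1 h.symm
      have hz : ∀ c, W m' c = 0 := fun c =>
        Finset.sum_eq_zero fun θ hθ => by rw [h0 θ hθ, zero_mul]
      rw [hz, hz]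
    · have hUeq : U m = U m' := le_antisymm (hUle m m' hm') (hUle m' m hm)
      have h1 := hsend m m'
      rw [hUeq] at h1
      have h2 : ∑ c, r m' c * W m' c ≤ ∑ c, r m c * W m' c :=
        le_of_mul_le_mul_left (by linarith) hε
      set K := ∑ c, r m' c * W m' c with hK
      have h3 : r m a * (K - W m' a) ≤ ∑ c, r m c * (K - W m' c) :=
        Finset.single_le_sum (f := fun c => r m c * (K - W m' c))
          (fun c _ => mul_nonneg (hrnn m c) (sub_nonneg.2 (hval m' hm' c))) (Finset.mem_univ a)
      have h4 : ∑ c, r m c * (K - W m' c) = K - ∑ c, r m c * W m' c := by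
        simp only [mul_sub]
        rw [Finset.sum_sub_distrib, ← Finset.sum_mul, hrsum, one_mul]
      have h5 : K - W m' a ≤ 0 := by
        by_contra hcon
        have := mul_pos ha (not_le.1 hcon)
        linarith
      have h6 := hval m' hm' a'
      linarith
  have hagg : ∀ c, ∑ θ, μ θ * uR (c, θ) = ∑ m', W m' c := by
    intro c
    simp only [hW]
    rw [Finset.sum_comm]
    refine Finset.sum_congr rfl fun θ _ => ?_
    rw [← Finset.sum_mul, ← Finset.mul_sum, hσsum, mul_one]
  rw [hagg, hagg]
  exact Finset.sum_le_sum fun m' _ => hfin m'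
end

section
/- Let Θ be a finite state set with prior μ (a probability distribution on Θ), A a finite action set, M a finite message set, u_R : A × Θ → ℝ, and let (Ω₁, P₁), (Ω₂, P₂) be probability spaces with Ω := Ω₁ × Ω₂ carrying the product probability measure P := P₁ ⊗ P₂. Let ũ : A × M × Ω₁ → ℝ and U : A × Ω₂ → ℝ be measurable, and suppose the law under P₂ of the random vector ω₂ ↦ (U(a, ω₂))_{a ∈ A} is absolutely continuous with respect to Lebesgue measure on ℝ^A. Define the state-independent idiosyncratic sender utility u_S(a, m, ω) := ũ(a, m, ω₁) + U(a, ω₂), extended to mixed actions p by u_S(p, m, ω) := ∑_a p(a)·u_S(a, m, ω). Then in any equilibrium of this communication game, for every on-path message m and every action a in the support of the receiver's response r(m), a maximizes a' ↦ ∑_θ μ(θ)·u_R(a', θ) over A; that is, no equilibrium is persuasive. (Fragility Proposition, part (1), in the case of finitely many messages: no persuasive equilibrium exists if the sender's state-independent preference decomposes as ũ(a, m, ω₁) + U(a, ω₂) with U admitting a density over ℝ^A.) -/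
open Finset MeasureTheory

lemma hyperplane_null {A : Type*} [Fintype A] (d : A → ℝ) (hd : d ≠ 0) (c : ℝ) :
    (volume : Measure (A → ℝ)) {x | ∑ a, d a * x a = c} = 0 := by
  classical
  rcases Set.eq_empty_or_nonempty {x : A → ℝ | ∑ a, d a * x a = c} with h | ⟨x0, hx0⟩
  · rw [h]; simp
  let L : (A → ℝ) →ₗ[ℝ] ℝ := ∑ a, d a • LinearMap.proj a
  have hL : ∀ x, L x = ∑ a, d a * x a := by intro x; simp [L]
  have hne : LinearMap.ker L ≠ ⊤ := by
    intro h
    apply hd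
    funext a
    have h1 : Pi.single a (1 : ℝ) ∈ LinearMap.ker L := by rw [h]; trivial
    rw [LinearMap.mem_ker, hL] at h1
    simpa [Pi.single_apply] using h1
  have hS : AffineSubspace.mk' x0 (LinearMap.ker L) ≠ ⊤ := by
    intro h
    apply hne
    rw [← AffineSubspace.direction_mk' x0 (LinearMap.ker L), h, AffineSubspace.direction_top]
  refine measure_mono_null ?_ (Measure.addHaar_affineSubspace volume _ hS)
  intro x hx
  rw [SetLike.mem_coe, AffineSubspace.mem_mk', LinearMap.mem_ker, vsub_eq_sub, map_sub, hL, hL]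
  simp only [Set.mem_setOf_eq] at hx hx0
  rw [hx, hx0, sub_self]

/-- Fragility (finitely many messages): if the sender's state-independent idiosyncratic
utility decomposes as `uTil (a, m, ω₁) + U (a, ω₂)` where the law of `ω₂ ↦ (U a ω₂)_a` is
absolutely continuous with respect to Lebesgue measure on `ℝ^A`, then in any equilibrium
every action in the support of the receiver's response to an on-path message is a best
response to the prior; i.e. no equilibrium is persuasive. -/
theorem fragility_no_persuasive_equilibrium
    {Θ A M Ω₁ Ω₂ : Type*}
    [Fintype Θ] [Fintype A] [Fintype M]
    [MeasurableSpace M] [MeasurableSingletonClass M]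
    [MeasurableSpace Ω₁] [MeasurableSpace Ω₂]
    (P₁ : Measure Ω₁) (P₂ : Measure Ω₂)
    [IsProbabilityMeasure P₁] [IsProbabilityMeasure P₂]
    (μ : Θ → ℝ) (hμnn : ∀ θ, 0 ≤ μ θ) (hμsum : ∑ θ, μ θ = 1)
    (uR : A × Θ → ℝ)
    (uTil : A → M → Ω₁ → ℝ) (huTilmeas : ∀ a m, Measurable (uTil a m))
    (U : A → Ω₂ → ℝ) (hUmeas : ∀ a, Measurable (U a))
    -- the law of `ω₂ ↦ (U a ω₂)_{a ∈ A}` admits a density over `ℝ^A`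
    (hdens : (P₂.map fun ω₂ => fun a : A => U a ω₂).AbsolutelyContinuous
      (volume : Measure (A → ℝ)))
    -- sender strategy
    (𝓜 : Θ → Ω₁ × Ω₂ → M) (h𝓜meas : ∀ θ, Measurable (𝓜 θ))
    -- receiver strategy
    (r : M → A → ℝ) (hrnn : ∀ m a, 0 ≤ r m a) (hrsum : ∀ m, ∑ a, r m a = 1)
    -- probability that message `m` is sent from state `θ`
    (pm : Θ → M → ℝ)
    (hpm : ∀ θ m, pm θ m = ((P₁.prod P₂) {ω | 𝓜 θ ω = m}).toReal)
    -- posterior beliefs, given by Bayes' rule on path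
    (ν : M → Θ → ℝ)
    (hbayes : ∀ m, 0 < ∑ θ, μ θ * pm θ m → ∀ θ,
      ν m θ = μ θ * pm θ m / ∑ θ', μ θ' * pm θ' m)
    -- (i) sender optimality, P-almost everywhere
    (hsender : ∀ θ, ∀ᵐ ω ∂(P₁.prod P₂), ∀ m' : M,
      ∑ a, r m' a * (uTil a m' ω.1 + U a ω.2) ≤
        ∑ a, r (𝓜 θ ω) a * (uTil a (𝓜 θ ω) ω.1 + U a ω.2))
    -- (ii) receiver optimality at on-path messages
    (hreceiver : ∀ m, 0 < ∑ θ, μ θ * pm θ m → ∀ a, 0 < r m a → ∀ a' : A,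
      ∑ θ, ν m θ * uR (a', θ) ≤ ∑ θ, ν m θ * uR (a, θ)) :
    -- conclusion: no persuasion
    ∀ m, 0 < ∑ θ, μ θ * pm θ m → ∀ a, 0 < r m a → ∀ a' : A,
      ∑ θ, μ θ * uR (a', θ) ≤ ∑ θ, μ θ * uR (a, θ) := by
  classical
  intro m hm a ha a'
  have htie : ∀ m1 m2 : M, r m1 ≠ r m2 → ∀ᵐ ω ∂(P₁.prod P₂),
      ∑ a, r m1 a * (uTil a m1 ω.1 + U a ω.2) ≠ ∑ a, r m2 a * (uTil a m2 ω.1 + U a ω.2) := by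
    intro m1 m2 hne
    have hmeas : MeasurableSet {ω : Ω₁ × Ω₂ | ∑ a, r m1 a * (uTil a m1 ω.1 + U a ω.2)
        = ∑ a, r m2 a * (uTil a m2 ω.1 + U a ω.2)} := by
      apply measurableSet_eq_fun
      · exact Finset.measurable_sum _ fun a _ => (((huTilmeas a m1).comp measurable_fst).add
          ((hUmeas a).comp measurable_snd)).const_mul _
      · exact Finset.measurable_sum _ fun a _ => (((huTilmeas a m2).comp measurable_fst).add
          ((hUmeas a).comp measurable_snd)).const_mul _
    rw [ae_iff]
    simp only [ne_eq, not_not]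
    rw [Measure.measure_prod_null hmeas]
    refine Filter.Eventually.of_forall fun ω₁ => ?_
    have hz := hdens (hyperplane_null (fun a => r m1 a - r m2 a)
      (by intro h; apply hne; funext a; exact sub_eq_zero.mp (congrFun h a))
      (∑ a, r m2 a * uTil a m2 ω₁ - ∑ a, r m1 a * uTil a m1 ω₁))
    have hUm : Measurable (fun ω₂ => fun a : A => U a ω₂) := measurable_pi_lambda _ hUmeas
    have hz2 := Measure.preimage_null_of_map_null hUm.aemeasurable hz
    refine measure_mono_null ?_ hz2
    intro ω₂ h
    simp only [Set.mem_preimage, Set.mem_setOf_eq, mul_add, sub_mul, Finset.sum_add_distrib,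
      Finset.sum_sub_distrib] at h ⊢
    linarith
  have htie' : ∀ᵐ ω ∂(P₁.prod P₂), ∀ m1 m2 : M, r m1 ≠ r m2 →
      ∑ a, r m1 a * (uTil a m1 ω.1 + U a ω.2) ≠ ∑ a, r m2 a * (uTil a m2 ω.1 + U a ω.2) := by
    rw [ae_all_iff]; intro m1
    rw [ae_all_iff]; intro m2
    by_cases h : r m1 = r m2
    · exact Filter.Eventually.of_forall fun _ h' => absurd h h'
    · filter_upwards [htie m1 m2 h] with ω hω _ using hω
  have hsame : ∀ θ θ', ∀ᵐ ω ∂(P₁.prod P₂), r (𝓜 θ ω) = r (𝓜 θ' ω) := by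
    intro θ θ'
    filter_upwards [htie', hsender θ, hsender θ'] with ω h1 h2 h3
    by_contra hne
    exact h1 _ _ hne (le_antisymm (h3 _) (h2 _))
  let C : Finset M := Finset.univ.filter fun m' => r m' = r m
  have hQ : ∀ θ, ∑ m' ∈ C, pm θ m' = ((P₁.prod P₂) {ω | r (𝓜 θ ω) = r m}).toReal := by
    intro θ
    have h := sum_measureReal_preimage_singleton (μ := P₁.prod P₂) C (f := 𝓜 θ)
      (fun y _ => h𝓜meas θ (measurableSet_singleton y))
    have e : 𝓜 θ ⁻¹' (C : Set M) = {ω | r (𝓜 θ ω) = r m} := by ext ω; simp [C]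
    rw [e] at h
    simp only [hpm]
    exact h
  have hQeq : ∀ θ θ', ∑ m' ∈ C, pm θ m' = ∑ m' ∈ C, pm θ' m' := by
    intro θ θ'
    rw [hQ, hQ]
    congr 1
    apply measure_congr
    filter_upwards [hsame θ θ'] with ω h
    exact congrArg (fun q => q = r m) h
  have hpm0 : ∀ θ m', 0 ≤ pm θ m' := fun θ m' => by rw [hpm]; exact ENNReal.toReal_nonneg
  obtain ⟨θ₀, -, hθ₀⟩ := Finset.exists_ne_zero_of_sum_ne_zero hm.ne'
  have hQpos : 0 < ∑ m' ∈ C, pm θ₀ m' := by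
    have h1 : 0 < pm θ₀ m := lt_of_le_of_ne (hpm0 _ _) (fun h => hθ₀ (by rw [← h, mul_zero]))
    exact h1.trans_le (Finset.single_le_sum (f := fun m' => pm θ₀ m')
      (fun i _ => hpm0 θ₀ i) (by simp [C]))
  have key : ∀ m' ∈ C, ∑ θ, μ θ * pm θ m' * uR (a', θ) ≤ ∑ θ, μ θ * pm θ m' * uR (a, θ) := by
    intro m' hm'
    have hr : r m' = r m := by simpa [C] using hm'
    have hnn : ∀ θ ∈ Finset.univ, 0 ≤ μ θ * pm θ m' := fun θ _ => mul_nonneg (hμnn θ) (hpm0 θ m')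
    rcases (Finset.sum_nonneg hnn).eq_or_lt with h0 | hpos
    · have hz := (Finset.sum_eq_zero_iff_of_nonneg hnn).mp h0.symm
      have : ∀ b, ∑ θ, μ θ * pm θ m' * uR (b, θ) = 0 := fun b =>
        Finset.sum_eq_zero fun θ hθ => by rw [hz θ hθ, zero_mul]
      rw [this, this]
    · have h := hreceiver m' hpos a (by rw [hr]; exact ha) a'
      have e : ∀ b, ∑ θ, ν m' θ * uR (b, θ)
          = (∑ θ, μ θ * pm θ m' * uR (b, θ)) / ∑ θ, μ θ * pm θ m' := by
        intro b
        rw [Finset.sum_div]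
        refine Finset.sum_congr rfl fun θ _ => ?_
        rw [hbayes m' hpos θ]; ring
      rw [e, e] at h
      exact (div_le_div_iff_of_pos_right hpos).mp h
  have hsum := Finset.sum_le_sum key
  have e : ∀ b, ∑ m' ∈ C, ∑ θ, μ θ * pm θ m' * uR (b, θ)
      = (∑ m' ∈ C, pm θ₀ m') * ∑ θ, μ θ * uR (b, θ) := by
    intro b
    rw [Finset.sum_comm, Finset.mul_sum]
    refine Finset.sum_congr rfl fun θ _ => ?_
    rw [hQeq θ₀ θ, Finset.sum_mul]
    exact Finset.sum_congr rfl fun m' _ => by ring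
  rw [e, e] at hsum
  exact le_of_mul_le_mul_left hsum hQpos
end

section
/- Let A be a finite set, S a set of states, N ≥ 1, s_0, …, s_N ∈ S, u : A × S → ℝ, and q_0, …, q_N probability distributions on A; write ū(q, s) := ∑_{a ∈ A} q(a)·u(a, s). Assume: (i) for all 0 ≤ j < k ≤ N and all a ∈ supp q_j, a' ∈ supp q_k, u(a, s_j) − u(a', s_j) ≥ u(a, s_{j+1}) − u(a', s_{j+1}); (ii) for each 0 ≤ j < N there exists a pair (a, a') ∈ supp q_j × supp q_{j+1} for which the inequality in (i) with k = j+1 is strict; (iii) ū(q_{i−1}, s_i) = ū(q_i, s_i) for all i = 1, …, N. Then ū(q_0, s_0) > ū(q_N, s_0). (Step 1 of the proof of the ordinal-transparence theorem: under semi-local increasing differences, indifference of each state over its neighbouring message-actions along a path generates a strict preference of the initial state for its neighbouring action over the path's terminal action.) -/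
open Finset

lemma aux_diff {A : Type*} [Fintype A] (p r d : A → ℝ)
    (hp : ∑ a, p a = 1) (hr : ∑ a, r a = 1) :
    ∑ a, p a * d a - ∑ a, r a * d a = ∑ x : A × A, p x.1 * r x.2 * (d x.1 - d x.2) := by
  rw [Fintype.sum_prod_type]
  have h1 : ∑ a, ∑ b, p a * r b * d a = ∑ a, p a * d a := by
    refine Finset.sum_congr rfl fun a _ => ?_
    have : ∀ b, p a * r b * d a = (p a * d a) * r b := fun b => by ring
    simp only [this, ← Finset.mul_sum, hr, mul_one]
  have h2 : ∑ a, ∑ b, p a * r b * d b = ∑ b, r b * d b := by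
    have : ∀ a b, p a * r b * d b = p a * (r b * d b) := fun a b => by ring
    simp only [this, ← Finset.mul_sum, ← Finset.sum_mul, hp, one_mul]
  simp only [mul_sub, Finset.sum_sub_distrib]
  rw [h1, h2]

lemma aux_nonneg {A : Type*} (p r d : A → ℝ)
    (hp0 : ∀ a, 0 ≤ p a) (hr0 : ∀ a, 0 ≤ r a)
    (h : ∀ a b, 0 < p a → 0 < r b → d b ≤ d a) (x : A × A) :
    0 ≤ p x.1 * r x.2 * (d x.1 - d x.2) := by
  rcases (hp0 x.1).eq_or_lt with h1 | h1
  · simp [← h1]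
  rcases (hr0 x.2).eq_or_lt with h2 | h2
  · simp [← h2]
  exact mul_nonneg (mul_pos h1 h2).le (sub_nonneg.2 (h _ _ h1 h2))

lemma aux_le {A : Type*} [Fintype A] (p r d : A → ℝ)
    (hp0 : ∀ a, 0 ≤ p a) (hr0 : ∀ a, 0 ≤ r a)
    (hp : ∑ a, p a = 1) (hr : ∑ a, r a = 1)
    (h : ∀ a b, 0 < p a → 0 < r b → d b ≤ d a) :
    0 ≤ ∑ a, p a * d a - ∑ a, r a * d a := by
  rw [aux_diff p r d hp hr]
  exact Finset.sum_nonneg fun x _ => aux_nonneg p r d hp0 hr0 h x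

lemma aux_lt {A : Type*} [Fintype A] (p r d : A → ℝ)
    (hp0 : ∀ a, 0 ≤ p a) (hr0 : ∀ a, 0 ≤ r a)
    (hp : ∑ a, p a = 1) (hr : ∑ a, r a = 1)
    (h : ∀ a b, 0 < p a → 0 < r b → d b ≤ d a)
    (h' : ∃ a b, 0 < p a ∧ 0 < r b ∧ d b < d a) :
    0 < ∑ a, p a * d a - ∑ a, r a * d a := by
  rw [aux_diff p r d hp hr]
  obtain ⟨a, b, ha, hb, hab⟩ := h'
  exact Finset.sum_pos' (fun x _ => aux_nonneg p r d hp0 hr0 h x)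
    ⟨(a, b), Finset.mem_univ _, mul_pos (mul_pos ha hb) (sub_pos.2 hab)⟩

/-- Step 1 of the ordinal-transparence theorem: along a chain `s 0, q 0, s 1, q 1, …,
s N, q N` of states and mixed actions, semi-local increasing differences (with a strict
pair between consecutive actions) together with the indifference of each state `s i`
between its neighbouring actions `q (i-1)` and `q i` implies that the initial state
`s 0` strictly prefers `q 0` to the terminal action `q N`. -/
theorem slid_chain_strict_preference {A S : Type*} [Fintype A]
    (N : ℕ) (hN : 1 ≤ N) (s : ℕ → S) (u : A × S → ℝ)
    (q : ℕ → A → ℝ)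
    (hqnn : ∀ i, i ≤ N → ∀ a, 0 ≤ q i a)
    (hqsum : ∀ i, i ≤ N → ∑ a, q i a = 1)
    -- (i) semi-local increasing differences along subpaths
    (hslid : ∀ j k, j < k → k ≤ N → ∀ a a' : A, 0 < q j a → 0 < q k a' →
      u (a, s (j + 1)) - u (a', s (j + 1)) ≤ u (a, s j) - u (a', s j))
    -- (ii) a strict pair between consecutive actions
    (hstrict : ∀ j, j < N → ∃ a a' : A, 0 < q j a ∧ 0 < q (j + 1) a' ∧
      u (a, s (j + 1)) - u (a', s (j + 1)) < u (a, s j) - u (a', s j))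
    -- (iii) indifference of each intermediate state over its neighbouring actions
    (hindiff : ∀ i, 1 ≤ i → i ≤ N →
      ∑ a, q (i - 1) a * u (a, s i) = ∑ a, q i a * u (a, s i)) :
    ∑ a, q N a * u (a, s 0) < ∑ a, q 0 a * u (a, s 0) := by
  have key : ∀ m, m + 1 ≤ N →
      ∑ a, q N a * u (a, s (N - (m + 1))) <
        ∑ a, q (N - (m + 1)) a * u (a, s (N - (m + 1))) := by
    intro m
    induction m with
    | zero =>
      intro hm
      obtain ⟨j, rfl⟩ : ∃ j, N = j + 1 := ⟨N - 1, by omega⟩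
      have e : j + 1 - (0 + 1) = j := by omega
      rw [e]
      have hi := hindiff (j + 1) (by omega) le_rfl
      simp only [Nat.add_sub_cancel] at hi
      have := aux_lt (q j) (q (j + 1)) (fun a => u (a, s j) - u (a, s (j + 1)))
        (hqnn _ (by omega)) (hqnn _ le_rfl) (hqsum _ (by omega)) (hqsum _ le_rfl)
        (fun a b ha hb => by
          have := hslid j (j + 1) (by omega) le_rfl a b ha hb
          linarith)
        (by
          obtain ⟨a, b, ha, hb, hab⟩ := hstrict j (by omega)
          exact ⟨a, b, ha, hb, by linarith⟩)
      simp only [mul_sub, Finset.sum_sub_distrib] at this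
      linarith
    | succ m ih =>
      intro hm
      have ih := ih (by omega)
      obtain ⟨j, hj⟩ : ∃ j, j = N - (m + 1 + 1) := ⟨_, rfl⟩
      have e : N - (m + 1) = j + 1 := by omega
      rw [← hj]
      rw [e] at ih
      have hi := hindiff (j + 1) (by omega) (by omega)
      simp only [Nat.add_sub_cancel] at hi
      have := aux_le (q j) (q N) (fun a => u (a, s j) - u (a, s (j + 1)))
        (hqnn _ (by omega)) (hqnn _ le_rfl) (hqsum _ (by omega)) (hqsum _ le_rfl)
        (fun a b ha hb => by
          have := hslid j N (by omega) le_rfl a b ha hb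
          linarith)
      simp only [mul_sub, Finset.sum_sub_distrib] at this
      linarith
  have h := key (N - 1) (by omega)
  have e : N - (N - 1 + 1) = 0 := by omega
  rwa [e] at h
end
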